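/- arXiv:1611.07207 — 5 statements merged into one kernel-verified Lean document; each statement's English description precedes it below -/
import Mathlib

section
/- For every θ > 0 there exists a Borel probability measure ν on ℝ, supported on [0,∞), such that for every λ ≥ 0, ∫ e^{−λt} dν(t) = exp(θ ∫_0^1 (e^{−λx}−1)/x dx). (That is, exp(θ ∫_0^1 (e^{−λx}−1)/x dx) is the Laplace transform of a probability distribution on [0,∞).) -/
open MeasureTheory Filter Topology

lemma gd_discrete (θ : ℝ) (hθ : 0 < θ) (N : ℝ) (hN : 0 < N) (m : ℕ) :
    ∃ μ : Measure ℝ, IsProbabilityMeasure μ ∧ (∀ᵐ t ∂μ, 0 ≤ t) ∧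
      ∀ l : ℝ, ∫ t, Real.exp (-l * t) ∂μ =
        Real.exp (θ * ∑ k ∈ Finset.range m,
          (Real.exp (-l * (((k : ℝ) + 1) / N)) - 1) / ((k : ℝ) + 1)) := by
  induction m with
  | zero =>
    refine ⟨Measure.dirac 0, inferInstance, ?_, ?_⟩
    · rw [ae_dirac_iff measurableSet_Ici]
    · intro l
      simp
  | succ m ih =>
    obtain ⟨μ, h1, h2, h3⟩ := ih
    set r : NNReal := ⟨θ / ((m : ℝ) + 1), by positivity⟩ with hr
    have hrr : (r : ℝ) = θ / ((m : ℝ) + 1) := rfl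
    set a : ℝ := ((m : ℝ) + 1) / N with ha
    have ha0 : 0 ≤ a := by positivity
    have hmeas : Measurable (fun p : ℝ × ℕ => p.1 + a * (p.2 : ℝ)) := by fun_prop
    refine ⟨(μ.prod (ProbabilityTheory.poissonMeasure r)).map
      (fun p : ℝ × ℕ => p.1 + a * (p.2 : ℝ)),
      Measure.isProbabilityMeasure_map hmeas.aemeasurable, ?_, ?_⟩
    · rw [ae_map_iff hmeas.aemeasurable measurableSet_Ici]
      have := (Measure.quasiMeasurePreserving_fst (μ := μ)
        (ν := ProbabilityTheory.poissonMeasure r)).ae h2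
      filter_upwards [this] with p hp
      positivity
    · intro l
      rw [integral_map hmeas.aemeasurable (by fun_prop)]
      have e1 : ∀ p : ℝ × ℕ, Real.exp (-l * (p.1 + a * (p.2 : ℝ)))
          = Real.exp (-l * p.1) * Real.exp (-l * a) ^ p.2 := by
        intro p
        rw [← Real.exp_nat_mul, ← Real.exp_add]
        congr 1
        ring
      simp_rw [e1]
      rw [integral_prod_mul (fun t : ℝ => Real.exp (-l * t))
        (fun n : ℕ => Real.exp (-l * a) ^ n), h3, Finset.sum_range_succ, mul_add, Real.exp_add,
        ProbabilityTheory.integral_poissonMeasure]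
      congr 1
      have hs := (NormedSpace.expSeries_div_hasSum_exp (𝔸 := ℝ) ((r : ℝ) * Real.exp (-l * a))).mul_left
        (Real.exp (-(r : ℝ)))
      rw [← Real.exp_eq_exp_ℝ, ← Real.exp_add] at hs
      have e2 : ∀ n : ℕ, (Real.exp (-(r : ℝ)) * (r : ℝ) ^ n / (n.factorial : ℝ)) •
          Real.exp (-l * a) ^ n =
          Real.exp (-(r : ℝ)) * (((r : ℝ) * Real.exp (-l * a)) ^ n / (n.factorial : ℝ)) := by
        intro n
        rw [smul_eq_mul, mul_pow]
        ring
      simp_rw [e2]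
      rw [hs.tsum_eq, hrr]
      congr 1
      ring

lemma gd_bound (l : ℝ) (N : ℕ) (hN : 0 < N) :
    -l ≤ ∑ k ∈ Finset.range N,
          (Real.exp (-l * (((k : ℝ) + 1) / N)) - 1) / ((k : ℝ) + 1) := by
  have hN' : (0 : ℝ) < N := by exact_mod_cast hN
  have : ∑ k ∈ Finset.range N, (-(l / N)) ≤ ∑ k ∈ Finset.range N,
          (Real.exp (-l * (((k : ℝ) + 1) / N)) - 1) / ((k : ℝ) + 1) := by
    apply Finset.sum_le_sum
    intro k _
    have hk : (0 : ℝ) < (k : ℝ) + 1 := by positivity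
    rw [le_div_iff₀ hk]
    have := Real.add_one_le_exp (-l * (((k : ℝ) + 1) / N))
    have e : -(l / N) * ((k : ℝ) + 1) = -l * (((k : ℝ) + 1) / N) := by ring
    linarith
  rw [Finset.sum_const, Finset.card_range, nsmul_eq_mul] at this
  have e : (N : ℝ) * (-(l / N)) = -l := by field_simp
  linarith

lemma gd_riemann (l : ℝ) (hl : 0 ≤ l) :
    Tendsto (fun n : ℕ => ∑ k ∈ Finset.range (n + 1),
          (Real.exp (-l * (((k : ℝ) + 1) / ((n + 1 : ℕ) : ℝ))) - 1) / ((k : ℝ) + 1)) atTop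
      (𝓝 (∫ x in Set.Ioc (0 : ℝ) 1, (Real.exp (-l * x) - 1) / x)) := by
  set g : ℝ → ℝ := fun x => (Real.exp (-l * x) - 1) / x with hg
  have hgm : Measurable g := by fun_prop
  have hgb : ∀ x, 0 < x → ‖g x‖ ≤ l := by
    intro x hx
    have h1 := Real.add_one_le_exp (-l * x)
    have h2 : Real.exp (-l * x) ≤ 1 := Real.exp_le_one_iff.2 (by nlinarith)
    rw [Real.norm_eq_abs, abs_le, hg]
    constructor
    · rw [le_div_iff₀ hx]; linarith
    · rw [div_le_iff₀ hx]; nlinarith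
  let F : ℕ → ℝ → ℝ := fun n x => g ((⌈((n + 1 : ℕ) : ℝ) * x⌉₊ : ℝ) / ((n + 1 : ℕ) : ℝ))
  have hFm : ∀ n, Measurable (F n) := by
    intro n
    refine hgm.comp ?_
    refine Measurable.div_const ?_ _
    exact measurable_from_top.comp (Nat.measurable_ceil.comp (by fun_prop))
  have hFb : ∀ n x, 0 < x → ‖F n x‖ ≤ l := by
    intro n x hx
    apply hgb
    have : 0 < ⌈((n + 1 : ℕ) : ℝ) * x⌉₊ := Nat.ceil_pos.2 (by positivity)
    positivity
  have hlim : Tendsto (fun n => ∫ x in Set.Ioc (0 : ℝ) 1, F n x) atTop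
      (𝓝 (∫ x in Set.Ioc (0 : ℝ) 1, g x)) := by
    apply tendsto_integral_of_dominated_convergence (fun _ => l)
    · intro n
      exact (hFm n).aestronglyMeasurable
    · exact integrable_const _
    · intro n
      filter_upwards [ae_restrict_mem measurableSet_Ioc] with x hx
      exact hFb n x hx.1
    · filter_upwards [ae_restrict_mem measurableSet_Ioc] with x hx
      have hc : ContinuousAt g x := by
        apply ContinuousAt.div _ continuousAt_id hx.1.ne'
        fun_prop
      have ht : Tendsto (fun n : ℕ => (⌈((n + 1 : ℕ) : ℝ) * x⌉₊ : ℝ) / ((n + 1 : ℕ) : ℝ))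
          atTop (𝓝 x) := by
        have h0 := (tendsto_nat_ceil_mul_div_atTop (R := ℝ) hx.1.le).comp
          ((tendsto_natCast_atTop_atTop (R := ℝ)).comp (tendsto_add_atTop_nat 1))
        refine h0.congr ?_
        intro n
        simp [mul_comm]
      exact hc.tendsto.comp ht
  refine hlim.congr ?_
  intro n
  set N : ℝ := ((n + 1 : ℕ) : ℝ) with hNdef
  have hN : 0 < N := by rw [hNdef]; positivity
  have key : ∀ k : ℕ, k < n + 1 → ∫ x in ((k : ℝ) / N)..(((k + 1 : ℕ) : ℝ) / N), F n x =
      (Real.exp (-l * (((k : ℝ) + 1) / N)) - 1) / ((k : ℝ) + 1) := by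
    intro k _
    have hle : (k : ℝ) / N ≤ ((k + 1 : ℕ) : ℝ) / N := by
      gcongr
      simp
    rw [intervalIntegral.integral_of_le hle]
    have : ∫ x in Set.Ioc ((k : ℝ) / N) (((k + 1 : ℕ) : ℝ) / N), F n x =
        ∫ x in Set.Ioc ((k : ℝ) / N) (((k + 1 : ℕ) : ℝ) / N), g (((k : ℝ) + 1) / N) := by
      apply setIntegral_congr_fun measurableSet_Ioc
      intro x hx
      have hx1 := (div_lt_iff₀ hN).1 hx.1
      have hx2 := (le_div_iff₀ hN).1 hx.2
      have : ⌈N * x⌉₊ = k + 1 := by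
        rw [Nat.ceil_eq_iff (by simp)]
        constructor
        · simp only [Nat.add_sub_cancel]; linarith
        · linarith
      simp only [F]
      rw [← hNdef, this]
      push_cast
      rfl
    rw [this, setIntegral_const, measureReal_def, Real.volume_Ioc, ENNReal.toReal_ofReal (by linarith), hg]
    push_cast
    have hk : (0 : ℝ) < (k : ℝ) + 1 := by positivity
    simp only [smul_eq_mul]
    field_simp
    ring
  have hint : ∀ k < n + 1, IntervalIntegrable (F n) volume ((k : ℝ) / N) (((k + 1 : ℕ) : ℝ) / N) := by
    intro k _
    have hle : (k : ℝ) / N ≤ ((k + 1 : ℕ) : ℝ) / N := by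
      gcongr
      simp
    rw [intervalIntegrable_iff_integrableOn_Ioc_of_le hle]
    refine Integrable.of_bound (hFm n).aestronglyMeasurable l ?_
    filter_upwards [ae_restrict_mem measurableSet_Ioc] with x hx
    exact hFb n x (lt_of_le_of_lt (by positivity) hx.1)
  have hsum := intervalIntegral.sum_integral_adjacent_intervals
    (a := fun k : ℕ => (k : ℝ) / N) (n := n + 1) hint
  rw [← hNdef, div_self hN.ne', Nat.cast_zero, zero_div,
    intervalIntegral.integral_of_le zero_le_one] at hsum
  rw [← hsum]
  exact Finset.sum_congr rfl fun k hk => key k (Finset.mem_range.1 hk)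

/-- Markov type tail bound from a Laplace transform bound. -/
lemma gd_tail (θ : ℝ) (μ : Measure ℝ) [IsProbabilityMeasure μ]
    (hμ : ∀ᵐ t ∂μ, 0 ≤ t) (R : ℝ) (hR : 0 < R)
    (h : Real.exp (-(θ / R)) ≤ ∫ t, Real.exp (-(1 / R) * t) ∂μ) :
    μ.real (Set.Icc 0 R)ᶜ ≤ 2 * θ / R := by
  have hint : Integrable (fun t => Real.exp (-(1 / R) * t)) μ := by
    refine Integrable.of_bound (by fun_prop) 1 ?_
    filter_upwards [hμ] with t ht
    rw [Real.norm_eq_abs, Real.abs_exp, Real.exp_le_one_iff]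
    have : 0 ≤ 1 / R * t := by positivity
    linarith
  have h1 : ∫ t, (Set.Icc 0 R)ᶜ.indicator (fun _ => (1 : ℝ)) t ∂μ ≤
      ∫ t, 2 * (1 - Real.exp (-(1 / R) * t)) ∂μ := by
    apply integral_mono_ae
    · exact (integrable_const _).indicator measurableSet_Icc.compl
    · exact ((integrable_const _).sub hint).const_mul 2
    filter_upwards [hμ] with t ht
    have ht' : 0 ≤ 1 / R * t := by positivity
    by_cases htR : t ≤ R
    · rw [Set.indicator_of_notMem (by simp [ht, htR])]
      have : Real.exp (-(1 / R) * t) ≤ 1 := Real.exp_le_one_iff.2 (by linarith)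
      linarith
    · rw [Set.indicator_of_mem (by simp only [Set.mem_compl_iff, Set.mem_Icc]; tauto)]
      have h2 : Real.exp (-(1 / R) * t) ≤ Real.exp (-1) := by
        apply Real.exp_le_exp.2
        have : 1 ≤ 1 / R * t := by
          rw [one_div_mul_eq_div, le_div_iff₀ hR]
          linarith
        linarith
      have h3 := Real.exp_neg_one_lt_d9
      linarith
  rw [integral_indicator measurableSet_Icc.compl, setIntegral_const, integral_const_mul,
    integral_sub (integrable_const _) hint] at h1
  simp only [smul_eq_mul, mul_one, integral_const, probReal_univ] at h1
  have h4 := Real.add_one_le_exp (-(θ / R))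
  have e : 2 * θ / R = 2 * (θ / R) := by ring
  linarith

/-- For every `θ > 0`, `exp (θ ∫_0^1 (e^{−λx}−1)/x dx)` is the Laplace transform of a
probability distribution supported on `[0,∞)` (the generalized Dickman distribution
`GD(θ)`). -/
theorem exists_generalized_dickman (θ : ℝ) (hθ : 0 < θ) :
    ∃ ν : Measure ℝ, IsProbabilityMeasure ν ∧ ν (Set.Iio 0) = 0 ∧
      ∀ l : ℝ, 0 ≤ l →
        ∫ t, Real.exp (-l * t) ∂ν =
          Real.exp (θ * ∫ x in Set.Ioc (0 : ℝ) 1, (Real.exp (-l * x) - 1) / x) := by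
  choose μ h1 h2 h3 using fun n : ℕ =>
    gd_discrete θ hθ ((n + 1 : ℕ) : ℝ) (by positivity) (n + 1)
  let P : ℕ → ProbabilityMeasure ℝ := fun n => ⟨μ n, h1 n⟩
  let u : ℕ → NNReal := fun n => Real.toNNReal (2 * θ / ((n : ℝ) + 1))
  have hu : Tendsto u atTop (𝓝 0) := by
    have : Tendsto (fun n : ℕ => 2 * θ / ((n : ℝ) + 1)) atTop (𝓝 0) :=
      tendsto_const_nhds.div_atTop
        (tendsto_atTop_add_const_right _ _ tendsto_natCast_atTop_atTop)
    have h := (continuous_real_toNNReal.tendsto 0).comp this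
    rw [Real.toNNReal_zero] at h
    exact h
  have hcomp := isCompact_setOfPred_probabilityMeasure_mass_eq_compl_isCompact_le (E := ℝ)
    (u := u) (K := fun n : ℕ => Set.Icc (0 : ℝ) ((n : ℝ) + 1)) hu (fun n => isCompact_Icc)
    (Or.inl inferInstance)
  have hmem : ∀ n, P n ∈ {μ : ProbabilityMeasure ℝ | ∀ n : ℕ, μ (Set.Icc (0 : ℝ) ((n : ℝ) + 1))ᶜ ≤ u n} := by
    intro n j
    have hj : (0 : ℝ) < (j : ℝ) + 1 := by positivity
    have := gd_tail θ (μ n) (h2 n) ((j : ℝ) + 1) hj (by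
      rw [h3 n (1 / ((j : ℝ) + 1))]
      apply Real.exp_le_exp.2
      have hb := gd_bound (1 / ((j : ℝ) + 1)) (n + 1) (by omega)
      have := mul_le_mul_of_nonneg_left hb hθ.le
      refine le_trans (le_of_eq ?_) this
      ring)
    rw [← NNReal.coe_le_coe]
    exact le_trans this (Real.le_coe_toNNReal _)
  obtain ⟨ν, -, hν⟩ := hcomp.ultrafilter_le_nhds ((hyperfilter ℕ).map P)
    (le_principal_iff.2 (Ultrafilter.mem_map.2
      (Filter.mem_of_superset Filter.univ_mem fun n _ => hmem n)))
  have hν' : Tendsto P (hyperfilter ℕ : Filter ℕ) (𝓝 ν) := hν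
  have hν0 : (ν : Measure ℝ) (Set.Iio 0) = 0 := by
    have := ProbabilityMeasure.le_liminf_measure_open_of_tendsto hν' (isOpen_Iio (a := (0 : ℝ)))
    have hz : ∀ n, (P n : Measure ℝ) (Set.Iio 0) = 0 := by
      intro n
      have := h2 n
      rw [ae_iff] at this
      simpa [P, Set.Iio] using this
    simp only [hz] at this
    simpa using this
  refine ⟨ν, inferInstance, hν0, ?_⟩
  intro l hl
  let f : BoundedContinuousFunction ℝ ℝ := BoundedContinuousFunction.ofNormedAddCommGroup
    (fun t => Real.exp (-l * max t 0)) (by fun_prop) 1 (by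
      intro t
      rw [Real.norm_eq_abs, Real.abs_exp, Real.exp_le_one_iff]
      have : 0 ≤ l * max t 0 := mul_nonneg hl (le_max_right _ _)
      linarith)
  have hf : ∀ ρ : Measure ℝ, (∀ᵐ t ∂ρ, 0 ≤ t) → ∫ t, f t ∂ρ = ∫ t, Real.exp (-l * t) ∂ρ := by
    intro ρ hρ
    apply integral_congr_ae
    filter_upwards [hρ] with t ht
    simp [f, max_eq_left ht]
  have hνae : ∀ᵐ t ∂(ν : Measure ℝ), 0 ≤ t := by
    rw [ae_iff]
    simpa [Set.Iio] using hν0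
  have hT := ProbabilityMeasure.tendsto_iff_forall_integral_tendsto.1 hν' f
  rw [hf _ hνae] at hT
  have hT2 : Tendsto (fun n => ∫ t, f t ∂(P n : Measure ℝ)) (hyperfilter ℕ : Filter ℕ)
      (𝓝 (Real.exp (θ * ∫ x in Set.Ioc (0 : ℝ) 1, (Real.exp (-l * x) - 1) / x))) := by
    have := (Real.continuous_exp.tendsto _).comp ((gd_riemann l hl).const_mul θ)
    refine (this.mono_left Nat.hyperfilter_le_atTop).congr ?_
    intro n
    exact ((hf _ (h2 n)).trans (h3 n l)).symm
  exact tendsto_nhds_unique hT hT2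
end

section
/- Let θ > 0 and let 𝒳 be a nonnegative random variable with E[𝒳] ≤ 1. Then there exists a Borel probability measure ν on ℝ, supported on [0,∞), such that for every λ ≥ 0, ∫ e^{−λt} dν(t) = exp(θ ∫_0^1 (E[exp(−λx𝒳)]−1)/x dx). (That is, exp(θ ∫_0^1 (E[exp(−λx𝒳)]−1)/x dx) is the Laplace transform of a probability distribution on [0,∞), denoted GD^{(𝒳)}(θ).) -/
open MeasureTheory Filter Topology

/-- Compactness step: limits of Laplace transforms. -/
lemma laplace_limit (μ : ℕ → ProbabilityMeasure ℝ) (C : NNReal)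
    (hμ : ∀ n k : ℕ, μ n (Set.Icc (0 : ℝ) (k + 1))ᶜ ≤ C / (k + 1))
    (L : ℝ → ℝ)
    (hL : ∀ l : ℝ, 0 ≤ l →
      Tendsto (fun n => ∫ t, Real.exp (-l * t) ∂(μ n : Measure ℝ)) atTop (𝓝 (L l))) :
    ∃ ν : Measure ℝ, IsProbabilityMeasure ν ∧ ν (Set.Iio 0) = 0 ∧
      ∀ l : ℝ, 0 ≤ l → ∫ t, Real.exp (-l * t) ∂ν = L l := by
  have hu : Tendsto (fun k : ℕ => C / ((k : NNReal) + 1)) atTop (𝓝 0) := by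
    rw [← NNReal.tendsto_coe]
    push_cast
    exact Tendsto.const_div_atTop
      (tendsto_atTop_add_const_right _ 1 tendsto_natCast_atTop_atTop) (C : ℝ)
  have hc := isCompact_setOfPred_probabilityMeasure_mass_eq_compl_isCompact_le (E := ℝ)
    (K := fun k : ℕ => Set.Icc (0 : ℝ) (k + 1)) hu (fun k => isCompact_Icc) (Or.inl inferInstance)
  obtain ⟨ν, hν, φ, hφ, hlim⟩ := hc.tendsto_subseq (x := μ) (fun n k => hμ n k)
  have key : ∀ ρ : ProbabilityMeasure ℝ,
      (∀ k : ℕ, ρ (Set.Icc (0 : ℝ) (k + 1))ᶜ ≤ C / (k + 1)) → (ρ : Measure ℝ) (Set.Iio 0) = 0 := by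
    intro ρ hρ
    have h0 : ρ (Set.Iio 0) ≤ 0 := by
      refine ge_of_tendsto' hu fun k => le_trans ?_ (hρ k)
      refine ρ.apply_mono ?_
      intro x hx hx'
      exact absurd hx'.1 (not_le.2 hx)
    have h1 : ρ (Set.Iio 0) = 0 := le_antisymm h0 zero_le
    rw [← ProbabilityMeasure.ennreal_coeFn_eq_coeFn_toMeasure, h1]
    rfl
  refine ⟨ν, inferInstance, key ν hν, fun l hl => ?_⟩
  let f : BoundedContinuousFunction ℝ ℝ := BoundedContinuousFunction.ofNormedAddCommGroup
    (fun t : ℝ => Real.exp (-l * max t 0)) (by fun_prop) 1 (by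
      intro t
      rw [Real.norm_eq_abs, abs_of_pos (Real.exp_pos _), Real.exp_le_one_iff]
      have := mul_nonneg hl (le_max_right t 0)
      linarith)
  have hf : ∀ ρ : ProbabilityMeasure ℝ, (ρ : Measure ℝ) (Set.Iio 0) = 0 →
      ∫ t, f t ∂(ρ : Measure ℝ) = ∫ t, Real.exp (-l * t) ∂(ρ : Measure ℝ) := by
    intro ρ hρ
    refine integral_congr_ae ?_
    have : ∀ᵐ t ∂(ρ : Measure ℝ), t ∉ Set.Iio (0 : ℝ) := measure_eq_zero_iff_ae_notMem.1 hρ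
    filter_upwards [this] with t ht
    have : 0 ≤ t := not_lt.1 ht
    simp [f, this]
  have h1 := (ProbabilityMeasure.tendsto_iff_forall_integral_tendsto.1 hlim) f
  rw [hf ν (key ν hν)] at h1
  have h2 : (fun i => ∫ t, f t ∂((μ ∘ φ) i : Measure ℝ)) =
      fun i => ∫ t, Real.exp (-l * t) ∂(μ (φ i) : Measure ℝ) := by
    funext i
    exact hf _ (key _ (hμ _))
  rw [h2] at h1
  exact tendsto_nhds_unique h1 ((hL l hl).comp hφ.tendsto_atTop)

/-- The law of a sum of i.i.d. nonnegative variables. -/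
lemma iid_sum {E : Type*} [MeasurableSpace E] (κ : Measure E) [IsProbabilityMeasure κ]
    (g : E → ℝ) (hg : Measurable g) (hg0 : ∀ x, 0 ≤ g x) (C : NNReal) (n : ℕ)
    (hm : (n : ENNReal) * ∫⁻ x, ENNReal.ofReal (g x) ∂κ ≤ C) :
    ∃ μ : ProbabilityMeasure ℝ,
      (∀ k : ℕ, μ (Set.Icc (0 : ℝ) (k + 1))ᶜ ≤ C / (k + 1)) ∧
      ∀ l : ℝ, ∫ t, Real.exp (-l * t) ∂(μ : Measure ℝ) = (∫ x, Real.exp (-l * g x) ∂κ) ^ n := by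
  let π := Measure.pi (fun _ : Fin n => κ)
  let S : (Fin n → E) → ℝ := fun x => ∑ i, g (x i)
  have hS : Measurable S := by fun_prop
  have hS0 : ∀ x, 0 ≤ S x := fun x => Finset.sum_nonneg fun i _ => hg0 _
  have hp : IsProbabilityMeasure (π.map S) := Measure.isProbabilityMeasure_map hS.aemeasurable
  let μ₀ : ProbabilityMeasure ℝ := ⟨π.map S, hp⟩
  refine ⟨μ₀, fun k => ?_, fun l => ?_⟩
  · rw [← ENNReal.coe_le_coe, ProbabilityMeasure.ennreal_coeFn_eq_coeFn_toMeasure]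
    change (π.map S) _ ≤ _
    rw [Measure.map_apply hS measurableSet_Icc.compl]
    have hmean : ∫⁻ x, ENNReal.ofReal (S x) ∂π ≤ C := by
      have : ∀ x, ENNReal.ofReal (S x) = ∑ i, ENNReal.ofReal (g (x i)) := fun x =>
        ENNReal.ofReal_sum_of_nonneg fun i _ => hg0 _
      simp_rw [this]
      rw [lintegral_finsetSum _ (fun i _ => by fun_prop)]
      have h2 : ∀ i : Fin n, ∫⁻ x, ENNReal.ofReal (g (x i)) ∂π
          = ∫⁻ x, ENNReal.ofReal (g x) ∂κ := fun i =>
        (measurePreserving_eval (fun _ : Fin n => κ) i).lintegral_comp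
          (f := fun y => ENNReal.ofReal (g y)) (by fun_prop)
      simp_rw [h2]
      simpa using hm
    have hmk := mul_meas_ge_le_lintegral (μ := π) (f := fun x => ENNReal.ofReal (S x))
      (by fun_prop) ((k : ENNReal) + 1)
    push_cast [ENNReal.coe_div (show ((k : NNReal) + 1) ≠ 0 by positivity)]
    rw [ENNReal.le_div_iff_mul_le (by simp) (by simp), mul_comm]
    refine le_trans (le_trans ?_ hmk) hmean
    gcongr
    intro x hx
    simp only [Set.mem_preimage, Set.mem_compl_iff, Set.mem_Icc, hS0 x, true_and, not_le] at hx
    have : ((k : ENNReal) + 1) = ENNReal.ofReal ((k : ℝ) + 1) := by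
      rw [ENNReal.ofReal_add (by positivity) (by positivity)]; simp
    rw [Set.mem_ofPred_eq, this]
    exact ENNReal.ofReal_le_ofReal hx.le
  · change ∫ t, Real.exp (-l * t) ∂(π.map S) = _
    rw [integral_map hS.aemeasurable (by fun_prop)]
    have : ∀ x, Real.exp (-l * S x) = ∏ i, Real.exp (-l * g (x i)) := fun x => by
      rw [← Real.exp_sum, Finset.mul_sum]
    simp_rw [this]
    rw [integral_fintype_prod_eq_pow (fun y => Real.exp (-l * g y))]
    simp

theorem exists_generalized_dickman_X
    {Ω : Type*} [MeasurableSpace Ω] (P : Measure Ω) [IsProbabilityMeasure P]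
    (θ : ℝ) (hθ : 0 < θ)
    (XX : Ω → ℝ) (hXXmeas : Measurable XX) (hXXnonneg : ∀ᵐ ω ∂P, 0 ≤ XX ω)
    (hXXint : Integrable XX P) (hXXmean : ∫ ω, XX ω ∂P ≤ 1) :
    ∃ ν : Measure ℝ, IsProbabilityMeasure ν ∧ ν (Set.Iio 0) = 0 ∧
      ∀ l : ℝ, 0 ≤ l →
        ∫ t, Real.exp (-l * t) ∂ν =
          Real.exp (θ * ∫ x in Set.Ioc (0 : ℝ) 1,
            ((∫ ω, Real.exp (-(l * x) * XX ω) ∂P) - 1) / x) := by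
  -- bounds on the Laplace transform of `XX`
  have hexpint : ∀ s : ℝ, 0 ≤ s → Integrable (fun ω => Real.exp (-s * XX ω)) P := by
    intro s hs
    refine Integrable.of_bound (by fun_prop) 1 ?_
    filter_upwards [hXXnonneg] with ω hω
    rw [Real.norm_eq_abs, abs_of_pos (Real.exp_pos _), Real.exp_le_one_iff]
    have := mul_nonneg hs hω
    linarith
  have hub : ∀ s : ℝ, 0 ≤ s → ∫ ω, Real.exp (-s * XX ω) ∂P ≤ 1 := by
    intro s hs
    calc ∫ ω, Real.exp (-s * XX ω) ∂P ≤ ∫ ω, (1 : ℝ) ∂P := by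
          refine integral_mono_ae (hexpint s hs) (integrable_const _) ?_
          filter_upwards [hXXnonneg] with ω hω
          rw [Real.exp_le_one_iff]
          have := mul_nonneg hs hω
          linarith
      _ = 1 := by simp
  have hlb : ∀ s : ℝ, 0 ≤ s → 1 - s ≤ ∫ ω, Real.exp (-s * XX ω) ∂P := by
    intro s hs
    calc 1 - s ≤ 1 - s * ∫ ω, XX ω ∂P := by nlinarith
      _ = ∫ ω, (1 - s * XX ω) ∂P := by
          rw [integral_sub (integrable_const _) (hXXint.const_mul s), integral_const_mul]
          simp
      _ ≤ _ := by
          refine integral_mono ((integrable_const _).sub (hXXint.const_mul s)) (hexpint s hs) ?_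
          intro ω
          have := Real.add_one_le_exp (-s * XX ω)
          simp only
          linarith
  have hmeas : ∀ l : ℝ, Measurable (fun x : ℝ => ∫ ω, Real.exp (-(l * x) * XX ω) ∂P) := by
    intro l
    refine StronglyMeasurable.measurable ?_
    refine StronglyMeasurable.integral_prod_right' (ν := P)
      (f := fun p : ℝ × Ω => Real.exp (-(l * p.1) * XX p.2)) ?_
    exact Measurable.stronglyMeasurable (by fun_prop)
  have hint : ∀ l : ℝ, 0 ≤ l → IntegrableOn
      (fun x : ℝ => ((∫ ω, Real.exp (-(l * x) * XX ω) ∂P) - 1) / x) (Set.Ioc 0 1) := by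
    intro l hl
    refine Measure.integrableOn_of_bounded (M := l) (by simp)
      (((hmeas l).sub_const 1).div measurable_id).aestronglyMeasurable ?_
    filter_upwards [ae_restrict_mem measurableSet_Ioc] with x hx
    have hs : 0 ≤ l * x := mul_nonneg hl hx.1.le
    have h1 := hub _ hs
    have h2 := hlb _ hs
    rw [Real.norm_eq_abs, abs_div, abs_of_pos hx.1, div_le_iff₀ hx.1, abs_le]
    constructor <;> linarith
  -- the approximating laws
  let ε : ℕ → ℝ := fun n => Real.exp (-((n + 1 : ℕ) : ℝ) / θ)
  have hε0 : ∀ n, 0 < ε n := fun n => Real.exp_pos _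
  have hε1 : ∀ n, ε n ≤ 1 := fun n => by
    rw [Real.exp_le_one_iff]
    exact div_nonpos_of_nonpos_of_nonneg (neg_nonpos.2 (Nat.cast_nonneg _)) hθ.le
  have happ : ∀ n : ℕ, ∃ μ : ProbabilityMeasure ℝ,
      (∀ k : ℕ, μ (Set.Icc (0 : ℝ) (k + 1))ᶜ ≤ θ.toNNReal / (k + 1)) ∧
      ∀ l : ℝ, 0 ≤ l → ∫ t, Real.exp (-l * t) ∂(μ : Measure ℝ) =
        (1 + θ / ((n + 1 : ℕ) : ℝ) * ∫ x in Set.Ioc (ε n) 1,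
            ((∫ ω, Real.exp (-(l * x) * XX ω) ∂P) - 1) / x) ^ (n + 1) := by
    intro n
    set N : ℝ := ((n + 1 : ℕ) : ℝ) with hN
    have hNpos : 0 < N := by rw [hN]; positivity
    let d : ℝ → ENNReal := fun x => ENNReal.ofReal (θ / N * x⁻¹)
    have hd : Measurable d := by fun_prop
    let ρ : Measure ℝ := (volume.restrict (Set.Ioc (ε n) 1)).withDensity d
    have hinvint : IntegrableOn (fun x : ℝ => θ / N * x⁻¹) (Set.Ioc (ε n) 1) := by
      refine Integrable.const_mul ?_ _
      have := (intervalIntegral.intervalIntegrable_inv (μ := volume) (a := ε n) (b := 1)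
        (f := fun x => x) (fun x hx => by
          rw [Set.uIcc_of_le (hε1 n)] at hx
          exact (lt_of_lt_of_le (hε0 n) hx.1).ne') continuousOn_id)
      exact (intervalIntegrable_iff_integrableOn_Ioc_of_le (hε1 n)).1 this
    have hinv : ∫ x in Set.Ioc (ε n) 1, θ / N * x⁻¹ = 1 := by
      rw [integral_const_mul, ← intervalIntegral.integral_of_le (hε1 n),
        integral_inv_of_pos (hε0 n) one_pos]
      simp only [ε, one_div, ← Real.exp_neg, Real.log_exp, ← hN]
      field_simp
    have hρ : IsProbabilityMeasure ρ := by
      constructor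
      rw [withDensity_apply _ MeasurableSet.univ, Measure.restrict_univ]
      rw [← ofReal_integral_eq_lintegral_ofReal hinvint, hinv]
      · simp
      · filter_upwards [ae_restrict_mem measurableSet_Ioc] with x hx
        have := (hε0 n).trans hx.1
        simp only [Pi.zero_apply]
        positivity
    have hρint : ∀ f : ℝ → ℝ, ∫ x, f x ∂ρ = ∫ x in Set.Ioc (ε n) 1, θ / N * x⁻¹ * f x := by
      intro f
      rw [integral_withDensity_eq_integral_toReal_smul hd (ae_of_all _ fun _ => by simp [d])]
      refine integral_congr_ae ?_
      filter_upwards [ae_restrict_mem measurableSet_Ioc] with x hx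
      have := (hε0 n).trans hx.1
      simp only [d, smul_eq_mul]
      rw [ENNReal.toReal_ofReal (by positivity)]
    have hρmem : ∀ᵐ x ∂ρ, x ∈ Set.Ioc (ε n) 1 :=
      (withDensity_absolutelyContinuous _ _).ae_le (ae_restrict_mem measurableSet_Ioc)
    obtain ⟨μ, h1, h2⟩ := iid_sum (ρ.prod P) (fun p => |p.1| * max (XX p.2) 0)
      (by fun_prop) (fun p => by positivity) θ.toNNReal (n + 1) (by
        have e1 : ∀ p : ℝ × Ω, ENNReal.ofReal (|p.1| * max (XX p.2) 0) =
            ENNReal.ofReal |p.1| * ENNReal.ofReal (max (XX p.2) 0) := fun p =>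
          ENNReal.ofReal_mul (abs_nonneg _)
        simp_rw [e1]
        rw [lintegral_prod_mul (f := fun x : ℝ => ENNReal.ofReal |x|)
          (g := fun ω => ENNReal.ofReal (max (XX ω) 0)) (by fun_prop) (by fun_prop)]
        have e2 : ∫⁻ ω, ENNReal.ofReal (max (XX ω) 0) ∂P ≤ 1 := by
          have : ∀ ω, ENNReal.ofReal (max (XX ω) 0) = ENNReal.ofReal (XX ω) := fun ω => by
            rw [ENNReal.ofReal_max]; simp
          simp_rw [this]
          rw [← ofReal_integral_eq_lintegral_ofReal hXXint hXXnonneg]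
          simpa using hXXmean
        have e3 : ∫⁻ x, ENNReal.ofReal |x| ∂ρ ≤ ENNReal.ofReal (θ / N) := by
          rw [lintegral_withDensity_eq_lintegral_mul _ hd (by fun_prop)]
          calc _ = ∫⁻ x in Set.Ioc (ε n) 1, ENNReal.ofReal (θ / N) := by
                refine setLIntegral_congr_fun measurableSet_Ioc ?_
                intro x hx
                have := (hε0 n).trans hx.1
                simp only [d, Pi.mul_apply]
                rw [← ENNReal.ofReal_mul (by positivity), abs_of_pos this, mul_assoc,
                  inv_mul_cancel₀ this.ne', mul_one]
            _ ≤ _ := by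
                rw [setLIntegral_const, Real.volume_Ioc]
                refine mul_le_of_le_one_right zero_le ?_
                rw [ENNReal.ofReal_le_one]
                linarith [hε0 n]
        calc _ ≤ ((n + 1 : ℕ) : ENNReal) * (ENNReal.ofReal (θ / N) * 1) := by gcongr
          _ = ENNReal.ofReal θ := by
            rw [mul_one, ← ENNReal.ofReal_natCast, ← ENNReal.ofReal_mul (by positivity), ← hN]
            congr 1
            field_simp
          _ ≤ _ := le_rfl)
    refine ⟨μ, h1, fun l hl => ?_⟩
    rw [h2 l]
    congr 1
    rw [integral_prod _ (by
      refine Integrable.of_bound (Measurable.aestronglyMeasurable (by fun_prop)) 1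
        (ae_of_all _ fun p => ?_)
      rw [Real.norm_eq_abs, abs_of_pos (Real.exp_pos _), Real.exp_le_one_iff]
      have : 0 ≤ l * (|p.1| * max (XX p.2) 0) := by positivity
      linarith)]
    have e4 : ∫ x, ∫ ω, Real.exp (-l * (|x| * max (XX ω) 0)) ∂P ∂ρ =
        ∫ x, ∫ ω, Real.exp (-(l * x) * XX ω) ∂P ∂ρ := by
      refine integral_congr_ae ?_
      filter_upwards [hρmem] with x hx
      refine integral_congr_ae ?_
      filter_upwards [hXXnonneg] with ω hω
      rw [abs_of_pos ((hε0 n).trans hx.1), max_eq_left hω]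
      congr 1
      ring
    simp only
    rw [e4, hρint, ← integral_const_mul]
    have hint2 := ((hint l hl).mono_set (Set.Ioc_subset_Ioc_left (hε0 n).le :
      Set.Ioc (ε n) 1 ⊆ Set.Ioc 0 1)).const_mul (θ / N)
    refine Eq.trans ?_ (congrArg (· + _) hinv)
    rw [← integral_add hinvint hint2]
    refine integral_congr_ae (ae_of_all _ fun x => ?_)
    simp only
    rw [div_eq_mul_inv _ x]
    ring
  choose μ hμ1 hμ2 using happ
  refine laplace_limit μ θ.toNNReal hμ1 _ fun l hl => ?_
  simp_rw [fun n => hμ2 n l hl]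
  -- convergence of the exponents
  have hU : ⋃ n, Set.Ioc (ε n) 1 = Set.Ioc (0 : ℝ) 1 := by
    have hεlim : Tendsto ε atTop (𝓝 0) := by
      refine Real.tendsto_exp_atBot.comp ?_
      refine Tendsto.atBot_div_const hθ ?_
      exact tendsto_neg_atTop_atBot.comp
        (tendsto_natCast_atTop_atTop.comp (tendsto_add_atTop_nat 1))
    ext x
    simp only [Set.mem_iUnion, Set.mem_Ioc]
    constructor
    · rintro ⟨n, h1, h2⟩
      exact ⟨(hε0 n).trans h1, h2⟩
    · rintro ⟨h1, h2⟩
      obtain ⟨n, hn⟩ := (hεlim.eventually_lt_const h1).exists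
      exact ⟨n, hn, h2⟩
  have hlim := tendsto_setIntegral_of_monotone (μ := volume)
    (s := fun n => Set.Ioc (ε n) 1)
    (f := fun x : ℝ => ((∫ ω, Real.exp (-(l * x) * XX ω) ∂P) - 1) / x)
    (fun n => measurableSet_Ioc) (by
      intro a b hab
      refine Set.Ioc_subset_Ioc_left ?_
      refine Real.exp_le_exp.2 ?_
      gcongr) (by rw [hU]; exact hint l hl)
  rw [hU] at hlim
  have hlim2 := hlim.const_mul θ
  let J : ℕ → ℝ := fun n => ∫ x in Set.Ioc (ε n) 1,
    ((∫ ω, Real.exp (-(l * x) * XX ω) ∂P) - 1) / x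
  have := Real.tendsto_one_add_pow_exp_of_tendsto
    (g := fun n : ℕ => θ / (n : ℝ) * J (n - 1))
    (t := θ * ∫ x in Set.Ioc (0 : ℝ) 1, ((∫ ω, Real.exp (-(l * x) * XX ω) ∂P) - 1) / x) (by
      rw [← tendsto_add_atTop_iff_nat 1]
      refine hlim2.congr fun n => ?_
      have : ((n + 1 : ℕ) : ℝ) ≠ 0 := by positivity
      simp only [Nat.add_sub_cancel, J]
      field_simp)
  exact this.comp (tendsto_add_atTop_nat 1)
end

section
/- Let θ > 0, let D_θ be a nonnegative random variable whose Laplace transform satisfies E[exp(−λ D_θ)] = exp(θ ∫_0^1 (e^{−λx}−1)/x dx) for all λ ≥ 0, and let U be uniformly distributed on [0,1] and independent of D_θ. Then U^{1/θ}(D_θ + 1) has the same distribution as D_θ. -/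
open MeasureTheory ProbabilityTheory Filter Topology

/-- Nonnegative variables with the same Laplace transform at the integers have the same law. -/
lemma law_eq_of_laplace_nat {Ω : Type*} [MeasurableSpace Ω] (P : Measure Ω)
    [IsProbabilityMeasure P] (X Y : Ω → ℝ) (hX : Measurable X) (hY : Measurable Y)
    (hX0 : ∀ᵐ ω ∂P, 0 ≤ X ω) (hY0 : ∀ᵐ ω ∂P, 0 ≤ Y ω)
    (h : ∀ n : ℕ, ∫ ω, Real.exp (-(n : ℝ) * X ω) ∂P = ∫ ω, Real.exp (-(n : ℝ) * Y ω) ∂P) :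
    Measure.map X P = Measure.map Y P := by
  let A : StarSubalgebra ℝ (BoundedContinuousFunction NNReal ℝ) :=
    { carrier := {g | ∃ p : Polynomial ℝ, ∀ x : NNReal, g x = p.eval (Real.exp (-(x : ℝ)))}
      mul_mem' := by
        rintro a b ⟨p, hp⟩ ⟨q, hq⟩
        exact ⟨p * q, fun x => by simp [hp, hq]⟩
      add_mem' := by
        rintro a b ⟨p, hp⟩ ⟨q, hq⟩
        exact ⟨p + q, fun x => by simp [hp, hq]⟩
      algebraMap_mem' := by
        intro r
        exact ⟨Polynomial.C r, fun x => by simp⟩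
      star_mem' := by
        rintro a ⟨p, hp⟩
        exact ⟨p, fun x => by simp [hp]⟩ }
  have hsep : (A.map (BoundedContinuousFunction.toContinuousMapStarₐ ℝ)).SeparatesPoints := by
    intro x y hxy
    let g : BoundedContinuousFunction NNReal ℝ :=
      BoundedContinuousFunction.ofNormedAddCommGroup (fun x : NNReal => Real.exp (-(x : ℝ)))
        (by fun_prop) 1 (fun x => by
          rw [Real.norm_eq_abs, abs_of_pos (Real.exp_pos _)]
          simp)
    refine ⟨_, ⟨BoundedContinuousFunction.toContinuousMapStarₐ ℝ g,
      ⟨g, ⟨Polynomial.X, fun x => by simp [g]⟩, rfl⟩, rfl⟩, ?_⟩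
    simpa [g] using hxy
  have hint : ∀ (Z : Ω → ℝ), Measurable Z → (∀ᵐ ω ∂P, 0 ≤ Z ω) → ∀ n : ℕ,
      Integrable (fun ω => Real.exp (-((Z ω).toNNReal : ℝ)) ^ n) P := by
    intro Z hZ _ n
    refine Integrable.of_bound (C := 1) (by fun_prop) (Eventually.of_forall fun ω => ?_)
    rw [Real.norm_eq_abs, abs_of_pos (by positivity)]
    exact pow_le_one₀ (Real.exp_pos _).le (by simp)
  have hval : ∀ (Z : Ω → ℝ), Measurable Z → (∀ᵐ ω ∂P, 0 ≤ Z ω) → ∀ n : ℕ,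
      ∫ ω, Real.exp (-((Z ω).toNNReal : ℝ)) ^ n ∂P = ∫ ω, Real.exp (-(n : ℝ) * Z ω) ∂P := by
    intro Z hZ hZ0 n
    refine integral_congr_ae ?_
    filter_upwards [hZ0] with ω hω
    rw [← Real.exp_nat_mul, Real.coe_toNNReal _ hω]
    ring_nf
  have key : Measure.map (fun ω => (X ω).toNNReal) P = Measure.map (fun ω => (Y ω).toNNReal) P := by
    have : IsProbabilityMeasure (Measure.map (fun ω => (X ω).toNNReal) P) :=
      Measure.isProbabilityMeasure_map (by fun_prop)
    have : IsProbabilityMeasure (Measure.map (fun ω => (Y ω).toNNReal) P) :=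
      Measure.isProbabilityMeasure_map (by fun_prop)
    refine ext_of_forall_mem_subalgebra_integral_eq_of_pseudoEMetric_complete_countable hsep ?_
    rintro g ⟨p, hp⟩
    rw [integral_map (by fun_prop) (by fun_prop), integral_map (by fun_prop) (by fun_prop)]
    simp only [hp, Polynomial.eval_eq_sum_range]
    rw [integral_finsetSum _ (fun i _ => (hint X hX hX0 i).const_mul _),
      integral_finsetSum _ (fun i _ => (hint Y hY hY0 i).const_mul _)]
    refine Finset.sum_congr rfl fun i _ => ?_
    rw [integral_const_mul, integral_const_mul, hval X hX hX0, hval Y hY hY0, h]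
  have hback : ∀ (Z : Ω → ℝ), Measurable Z → (∀ᵐ ω ∂P, 0 ≤ Z ω) →
      Measure.map (fun x : NNReal => (x : ℝ)) (Measure.map (fun ω => (Z ω).toNNReal) P)
        = Measure.map Z P := by
    intro Z hZ hZ0
    rw [Measure.map_map (by fun_prop) (by fun_prop)]
    refine Measure.map_congr ?_
    filter_upwards [hZ0] with ω hω
    simp [hω]
  rw [← hback X hX hX0, ← hback Y hY hY0, key]

lemma dickman_kernel_continuous : Continuous (dslope (fun y : ℝ => Real.exp (-y)) 0) := by
  have hc : Continuous (fun y : ℝ => Real.exp (-y)) := by fun_prop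
  rw [continuous_iff_continuousAt]
  intro y
  by_cases hy : y = 0
  · subst hy
    rw [continuousAt_dslope_same]
    fun_prop
  · rw [continuousAt_dslope_of_ne hy]
    exact hc.continuousAt

lemma dickman_exponent_eq (s : ℝ) :
    ∫ x in Set.Ioc (0 : ℝ) 1, (Real.exp (-s * x) - 1) / x =
      ∫ y in (0 : ℝ)..s, dslope (fun y : ℝ => Real.exp (-y)) 0 y := by
  have h := intervalIntegral.smul_integral_comp_mul_left
    (a := 0) (b := 1) (dslope (fun y : ℝ => Real.exp (-y)) 0) s
  rw [mul_zero, mul_one] at h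
  rw [← h, smul_eq_mul, intervalIntegral.integral_of_le zero_le_one, ← integral_const_mul]
  refine setIntegral_congr_fun measurableSet_Ioc fun x hx => ?_
  have hx0 : x ≠ 0 := hx.1.ne'
  by_cases hs : s = 0
  · simp [hs]
  · rw [dslope_of_ne _ (mul_ne_zero hs hx0), slope_def_field]
    simp only [neg_zero, Real.exp_zero, sub_zero, neg_mul]
    field_simp

/-- The fixed point equation for the Laplace transform. -/
lemma dickman_laplace_fixed (θ : ℝ) (hθ : 0 < θ) (φ : ℝ → ℝ)
    (hφ : ∀ s, φ s = Real.exp (θ * ∫ y in (0 : ℝ)..s, dslope (fun y : ℝ => Real.exp (-y)) 0 y))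
    (l : ℝ) (hl : 0 ≤ l) :
    ∫ u in (0 : ℝ)..1, Real.exp (-(l * u ^ (1 / θ))) * φ (l * u ^ (1 / θ)) = φ l := by
  have hd : ∀ s, HasDerivAt φ (φ s * (θ * dslope (fun y : ℝ => Real.exp (-y)) 0 s)) s := by
    intro s
    have h1 := (intervalIntegral.integral_hasDerivAt_right
      (dickman_kernel_continuous.intervalIntegrable 0 s)
      (dickman_kernel_continuous.stronglyMeasurableAtFilter _ _)
      dickman_kernel_continuous.continuousAt)
    have h2 := (h1.const_mul θ).exp
    rw [← hφ] at h2
    exact h2.congr_of_eventuallyEq (Eventually.of_forall hφ)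
  have hφc : Continuous φ := continuous_iff_continuousAt.2 fun s => (hd s).continuousAt
  have hpc : Continuous (fun u : ℝ => u ^ (1 / θ)) :=
    Real.continuous_rpow_const (by positivity)
  have hs : ∀ s : ℝ, s * dslope (fun y : ℝ => Real.exp (-y)) 0 s = Real.exp (-s) - 1 := by
    intro s
    have := sub_smul_dslope (fun y : ℝ => Real.exp (-y)) 0 s
    simpa using this
  have := intervalIntegral.integral_eq_sub_of_hasDerivAt_of_le (a := 0) (b := 1)
    (f := fun u : ℝ => u * φ (l * u ^ (1 / θ)))
    (f' := fun u : ℝ => Real.exp (-(l * u ^ (1 / θ))) * φ (l * u ^ (1 / θ))) zero_le_one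
    (by fun_prop) ?_ (Continuous.intervalIntegrable (by fun_prop) _ _)
  · simpa using this
  · intro u hu
    have hu0 : u ≠ 0 := hu.1.ne'
    have h1 : HasDerivAt (fun u : ℝ => l * u ^ (1 / θ)) (l * ((1 / θ) * u ^ (1 / θ - 1))) u :=
      (Real.hasDerivAt_rpow_const (Or.inl hu0)).const_mul l
    have h2 := (hasDerivAt_id u).mul ((hd (l * u ^ (1 / θ))).comp u h1)
    refine h2.congr_deriv ?_
    have h3 := hs (l * u ^ (1 / θ))
    have h4 : u * u ^ (1 / θ - 1) = u ^ (1 / θ) := by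
      rw [Real.rpow_sub_one hu0]; field_simp
    have h5 : Real.exp (-(l * u ^ (1 / θ))) =
      (l * u ^ (1 / θ)) * dslope (fun y : ℝ => Real.exp (-y)) 0 (l * u ^ (1 / θ)) + 1 := by
      rw [h3]; ring
    rw [h5]
    simp only [id, Function.comp_apply]
    generalize dslope (fun y : ℝ => Real.exp (-y)) 0 (l * u ^ (1 / θ)) = k
    generalize φ (l * u ^ (1 / θ)) = f
    rw [← h4]
    field_simp
    ring

/-- Equation (1.2) of Pinsky: if `D_θ` has the generalized Dickman distribution `GD(θ)`
(characterized by its Laplace transform) and `U` is uniform on `[0,1]` and independent of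
`D_θ`, then `U^{1/θ}(D_θ + 1)` has the same distribution as `D_θ`. -/
theorem dickman_distributional_identity
    {Ω : Type*} [MeasurableSpace Ω] (P : Measure Ω) [IsProbabilityMeasure P]
    (θ : ℝ) (hθ : 0 < θ)
    (D U : Ω → ℝ) (hDmeas : Measurable D) (hUmeas : Measurable U)
    (hDnonneg : ∀ᵐ ω ∂P, 0 ≤ D ω)
    (hU : Measure.map U P = volume.restrict (Set.Icc (0 : ℝ) 1))
    (hindep : IndepFun U D P)
    (hLaplace : ∀ l : ℝ, 0 ≤ l →
      ∫ ω, Real.exp (-l * D ω) ∂P =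
        Real.exp (θ * ∫ x in Set.Ioc (0 : ℝ) 1, (Real.exp (-l * x) - 1) / x)) :
    Measure.map (fun ω => U ω ^ (1 / θ) * (D ω + 1)) P = Measure.map D P := by
  have hU0 : ∀ᵐ ω ∂P, 0 ≤ U ω := by
    have h : ∀ᵐ u ∂(Measure.map U P), 0 ≤ u := by
      rw [hU]
      filter_upwards [ae_restrict_mem measurableSet_Icc] with u hu using hu.1
    exact ae_of_ae_map hUmeas.aemeasurable h
  have hX0 : ∀ᵐ ω ∂P, 0 ≤ U ω ^ (1 / θ) * (D ω + 1) := by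
    filter_upwards [hU0, hDnonneg] with ω h1 h2
    positivity
  refine law_eq_of_laplace_nat P _ D (by fun_prop) hDmeas hX0 hDnonneg fun n => ?_
  obtain ⟨φ, hφ⟩ : ∃ φ : ℝ → ℝ, ∀ s, φ s =
    Real.exp (θ * ∫ y in (0 : ℝ)..s, dslope (fun y : ℝ => Real.exp (-y)) 0 y) := ⟨_, fun _ => rfl⟩
  have hL : ∀ l : ℝ, 0 ≤ l → ∫ ω, Real.exp (-l * D ω) ∂P = φ l := by
    intro l hl
    rw [hLaplace l hl, hφ, dickman_exponent_eq]
  rw [hL n n.cast_nonneg, ← dickman_laplace_fixed θ hθ φ hφ n n.cast_nonneg]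
  have hfm : Measurable (fun p : ℝ × ℝ => Real.exp (-(n : ℝ) * (p.1 ^ (1 / θ) * (p.2 + 1)))) := by
    fun_prop
  have hmap := (indepFun_iff_map_prod_eq_prod_map_map hUmeas.aemeasurable hDmeas.aemeasurable).1
    hindep
  have hUD : Measurable (fun ω => (U ω, D ω)) := by fun_prop
  have hi : Integrable (fun p : ℝ × ℝ => Real.exp (-(n : ℝ) * (p.1 ^ (1 / θ) * (p.2 + 1))))
      (Measure.map (fun ω => (U ω, D ω)) P) := by
    rw [integrable_map_measure hfm.aestronglyMeasurable hUD.aemeasurable]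
    refine Integrable.of_bound (C := 1) (hfm.comp hUD).aestronglyMeasurable ?_
    filter_upwards [hX0] with ω hω
    rw [Real.norm_eq_abs, Function.comp_apply, abs_of_pos (Real.exp_pos _), Real.exp_le_one_iff]
    have : (0 : ℝ) ≤ n * (U ω ^ (1 / θ) * (D ω + 1)) := by positivity
    simpa using this
  have h1 := integral_map hUD.aemeasurable (μ := P) hfm.aestronglyMeasurable
  simp only at h1
  rw [← h1]
  have : IsProbabilityMeasure (Measure.map U P) :=
    Measure.isProbabilityMeasure_map hUmeas.aemeasurable
  have : IsProbabilityMeasure (Measure.map D P) :=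
    Measure.isProbabilityMeasure_map hDmeas.aemeasurable
  rw [hmap] at hi ⊢
  rw [integral_prod _ hi, hU, intervalIntegral.integral_of_le zero_le_one,
    ← integral_Icc_eq_integral_Ioc]
  refine setIntegral_congr_fun measurableSet_Icc fun u hu => ?_
  have hl : 0 ≤ (n : ℝ) * u ^ (1 / θ) := mul_nonneg n.cast_nonneg (Real.rpow_nonneg hu.1 _)
  simp only
  rw [integral_map hDmeas.aemeasurable (by fun_prop), ← hL _ hl, ← integral_const_mul]
  congr 1
  ext ω
  rw [← Real.exp_add]
  ring_nf
end

section
/- Let θ > 0, let D be a nonnegative random variable, and let U be uniformly distributed on [0,1] and independent of D, such that U^{1/θ}(D+1) has the same distribution as D. Let F(x) = P(D ≤ x) be the distribution function of D. Then: (1) F(x) = θ x^θ ∫_{x−1}^∞ F(v)(1+v)^{−1−θ} dv for all x > 0; (2) F is continuous on ℝ; and (3) F(x) = C_θ x^θ for all x ∈ [0,1], where C_θ = θ ∫_0^∞ F(v)(1+v)^{−1−θ} dv. -/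
open MeasureTheory ProbabilityTheory Filter Topology

lemma dick_tail (θ : ℝ) (hθ : 0 < θ) (c : ℝ) (hc : -1 < c) :
    ∫⁻ v in Set.Ioi c, ENNReal.ofReal ((1 + v) ^ (-1 - θ))
      = ENNReal.ofReal ((1 + c) ^ (-θ) / θ) := by
  have hint : IntegrableOn (fun v : ℝ => (1 + v) ^ (-1 - θ)) (Set.Ioi c) := by
    have := integrableOn_add_rpow_Ioi_of_lt (a := -1 - θ) (c := c) (m := 1) (by linarith) hc
    simpa only [add_comm] using this
  rw [← ofReal_integral_eq_lintegral_ofReal hint]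
  · congr 1
    have hd : ∀ x ∈ Set.Ici c,
        HasDerivAt (fun t : ℝ => (1 + t) ^ (-θ) / (-θ)) ((1 + x) ^ (-1 - θ)) x := by
      intro x hx
      have hx' : 1 + x ≠ 0 := by
        have : c ≤ x := hx
        linarith
      have h1 : HasDerivAt (fun t : ℝ => 1 + t) 1 x := (hasDerivAt_id x).const_add 1
      have h2 := (h1.rpow_const (p := -θ) (Or.inl hx')).div_const (-θ)
      refine h2.congr_deriv ?_
      rw [show -θ - 1 = -1 - θ by ring]
      field_simp
    have ht : Tendsto (fun t : ℝ => (1 + t) ^ (-θ) / (-θ)) atTop (𝓝 0) := by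
      have h1 : Tendsto (fun t : ℝ => 1 + t) atTop atTop :=
        tendsto_atTop_add_const_left _ _ tendsto_id
      have h2 := ((tendsto_rpow_neg_atTop hθ).comp h1).div_const (-θ)
      simpa using h2
    rw [integral_Ioi_of_hasDerivAt_of_tendsto' hd hint ht]
    field_simp
    ring
  · filter_upwards [ae_restrict_mem measurableSet_Ioi] with v hv
    have : c < v := hv
    exact Real.rpow_nonneg (by linarith) _

lemma dick_set (θ : ℝ) (hθ : 0 < θ) (x d : ℝ) (hx : 0 ≤ x) (hd : 0 ≤ d) :
    {u : ℝ | u ^ (1 / θ) * (d + 1) ≤ x} ∩ Set.Icc 0 1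
      = Set.Icc 0 ((x / max x (d + 1)) ^ θ) := by
  have hm : 0 < max x (d + 1) := lt_max_of_lt_right (by linarith)
  ext u
  simp only [Set.mem_inter_iff, Set.mem_setOf_eq, Set.mem_Icc, one_div]
  constructor
  · rintro ⟨h1, h2, h3⟩
    refine ⟨h2, ?_⟩
    rw [← Real.rpow_inv_le_iff_of_pos h2 (by positivity) hθ, le_div_iff₀ hm]
    have h4 : u ^ θ⁻¹ ≤ 1 := Real.rpow_le_one h2 h3 (by positivity)
    rcases max_cases x (d + 1) with h | h
    · rw [h.1]; nlinarith
    · rw [h.1]; exact h1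
  · rintro ⟨h1, h2⟩
    refine ⟨?_, h1, h2.trans ?_⟩
    · rw [← Real.rpow_inv_le_iff_of_pos h1 (by positivity) hθ, le_div_iff₀ hm] at h2
      have : 0 ≤ u ^ θ⁻¹ := Real.rpow_nonneg h1 _
      exact (mul_le_mul_of_nonneg_left (le_max_right _ _) this).trans h2
    · exact Real.rpow_le_one (by positivity) ((div_le_one hm).2 (le_max_left _ _)) hθ.le

lemma dick_swap (θ : ℝ) (hθ : 0 < θ) (ν : Measure ℝ) [IsProbabilityMeasure ν]
    (x : ℝ) (hx : 0 < x) :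
    ∫⁻ v in Set.Ioi (x - 1), ν (Set.Iic v) * ENNReal.ofReal ((1 + v) ^ (-1 - θ))
      = ∫⁻ d, ENNReal.ofReal ((max x (d + 1)) ^ (-θ) / θ) ∂ν := by
  have hmeas : Measurable (fun p : ℝ × ℝ =>
      ({p : ℝ × ℝ | p.2 ≤ p.1}).indicator
        (fun p => ENNReal.ofReal ((1 + p.1) ^ (-1 - θ))) p) := by
    apply Measurable.indicator
    · fun_prop
    · exact measurableSet_le measurable_snd measurable_fst
  have h1 : ∀ v, ν (Set.Iic v) * ENNReal.ofReal ((1 + v) ^ (-1 - θ))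
      = ∫⁻ d, ({p : ℝ × ℝ | p.2 ≤ p.1}).indicator
        (fun p => ENNReal.ofReal ((1 + p.1) ^ (-1 - θ))) (v, d) ∂ν := by
    intro v
    have : (fun d => ({p : ℝ × ℝ | p.2 ≤ p.1}).indicator
        (fun p => ENNReal.ofReal ((1 + p.1) ^ (-1 - θ))) (v, d))
        = (Set.Iic v).indicator (fun _ => ENNReal.ofReal ((1 + v) ^ (-1 - θ))) := by
      ext d
      simp [Set.indicator_apply]
    rw [this, lintegral_indicator_const measurableSet_Iic, mul_comm]
  simp_rw [h1]
  rw [lintegral_lintegral_swap hmeas.aemeasurable]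
  refine lintegral_congr fun d => ?_
  have h2 : (fun v => ({p : ℝ × ℝ | p.2 ≤ p.1}).indicator
        (fun p => ENNReal.ofReal ((1 + p.1) ^ (-1 - θ))) (v, d))
        = (Set.Ici d).indicator (fun v => ENNReal.ofReal ((1 + v) ^ (-1 - θ))) := by
      ext v
      simp [Set.indicator_apply]
  rw [h2, lintegral_indicator measurableSet_Ici, Measure.restrict_restrict measurableSet_Ici]
  have h3 : (Set.Ici d ∩ Set.Ioi (x - 1) : Set ℝ) =ᵐ[volume] Set.Ioi (max d (x - 1)) := by
    rw [← Set.Ioi_inter_Ioi]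
    exact Ioi_ae_eq_Ici.symm.inter (ae_eq_refl _)
  rw [setLIntegral_congr h3, dick_tail θ hθ _ (lt_max_of_lt_right (by linarith))]
  congr 4
  rw [← max_add_add_left, max_comm]
  congr 1 <;> ring

/-- Equations (5.5)–(5.6) of Pinsky and their consequences: if `D ≥ 0`, `U` is uniform on
`[0,1]` and independent of `D`, and `U^{1/θ}(D+1)` has the same law as `D`, then the
distribution function `F` of `D` satisfies
`F x = θ x^θ ∫_{x−1}^∞ F v (1+v)^{−1−θ} dv` for `x > 0`, `F` is continuous, and
`F x = C_θ x^θ` on `[0,1]` with `C_θ = θ ∫_0^∞ F v (1+v)^{−1−θ} dv`. -/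
theorem dickman_cdf_properties
    {Ω : Type*} [MeasurableSpace Ω] (P : Measure Ω) [IsProbabilityMeasure P]
    (θ : ℝ) (hθ : 0 < θ)
    (D U : Ω → ℝ) (hDmeas : Measurable D) (hUmeas : Measurable U)
    (hDnonneg : ∀ᵐ ω ∂P, 0 ≤ D ω)
    (hU : Measure.map U P = volume.restrict (Set.Icc (0 : ℝ) 1))
    (hindep : IndepFun U D P)
    (hfix : Measure.map (fun ω => U ω ^ (1 / θ) * (D ω + 1)) P = Measure.map D P)
    (F : ℝ → ℝ) (hF : ∀ x, F x = (P {ω | D ω ≤ x}).toReal) :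
    (∀ x : ℝ, 0 < x →
      F x = θ * x ^ θ * ∫ v in Set.Ioi (x - 1), F v * (1 + v) ^ (-1 - θ)) ∧
    Continuous F ∧
    (∀ x ∈ Set.Icc (0 : ℝ) 1,
      F x = (θ * ∫ v in Set.Ioi (0 : ℝ), F v * (1 + v) ^ (-1 - θ)) * x ^ θ) := by
  set ν := Measure.map D P with hν
  have hνp : IsProbabilityMeasure ν := Measure.isProbabilityMeasure_map hDmeas.aemeasurable
  have hFν : ∀ x, ν (Set.Iic x) = ENNReal.ofReal (F x) := by
    intro x
    rw [hF, ENNReal.ofReal_toReal (measure_ne_top _ _), hν,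
      Measure.map_apply hDmeas measurableSet_Iic]
    rfl
  have hF0 : ∀ x, 0 ≤ F x := fun x => by rw [hF]; exact ENNReal.toReal_nonneg
  have hνnn : ∀ᵐ d ∂ν, 0 ≤ d := by
    rw [hν, ae_map_iff hDmeas.aemeasurable measurableSet_Ici]
    exact hDnonneg
  have hFneg : ∀ x, x < 0 → F x = 0 := by
    intro x hx
    have : P {ω | D ω ≤ x} = 0 := by
      apply measure_mono_null _ (ae_iff.1 hDnonneg)
      intro ω hω
      simp only [Set.mem_setOf_eq] at hω ⊢
      linarith
    rw [hF, this]; rfl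
  have hkey : ∀ x, 0 ≤ x →
      ν (Set.Iic x) = ∫⁻ d, ENNReal.ofReal ((x / max x (d + 1)) ^ θ) ∂ν := by
    intro x hx
    have hm : Measurable (fun p : ℝ × ℝ => p.1 ^ (1 / θ) * (p.2 + 1)) := by fun_prop
    have hmap : ν = (((volume.restrict (Set.Icc (0 : ℝ) 1)).prod ν).map
        (fun p : ℝ × ℝ => p.1 ^ (1 / θ) * (p.2 + 1))) := by
      rw [← hU, hν, ← hindep.map_prod_eq_prod_map_map hUmeas.aemeasurable hDmeas.aemeasurable,
        Measure.map_map hm (hUmeas.prodMk hDmeas)]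
      exact hfix.symm
    conv_lhs => rw [hmap]
    rw [Measure.map_apply hm measurableSet_Iic,
      Measure.prod_apply_symm (hm measurableSet_Iic)]
    apply lintegral_congr_ae
    filter_upwards [hνnn] with d hd
    rw [Measure.restrict_apply' measurableSet_Icc]
    have := dick_set θ hθ x d hx hd
    have h2 : ((fun u : ℝ => (u, d)) ⁻¹' ((fun p : ℝ × ℝ => p.1 ^ (1 / θ) * (p.2 + 1)) ⁻¹'
        Set.Iic x)) = {u : ℝ | u ^ (1 / θ) * (d + 1) ≤ x} := rfl
    rw [h2, this, Real.volume_Icc, sub_zero]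
  have hone : ∀ x, 0 < x →
      F x = θ * x ^ θ * ∫ v in Set.Ioi (x - 1), F v * (1 + v) ^ (-1 - θ) := by
    intro x hx
    have hFmono : Monotone F := by
      intro a b hab
      rw [← ENNReal.ofReal_le_ofReal_iff (hF0 b), ← hFν, ← hFν]
      exact measure_mono (Set.Iic_subset_Iic.2 hab)
    have hFm : Measurable F := hFmono.measurable
    have hnn : 0 ≤ᵐ[volume.restrict (Set.Ioi (x - 1))]
        (fun v => F v * (1 + v) ^ (-1 - θ)) := by
      filter_upwards [ae_restrict_mem measurableSet_Ioi] with v hv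
      have : x - 1 < v := hv
      exact mul_nonneg (hF0 v) (Real.rpow_nonneg (by linarith) _)
    rw [integral_eq_lintegral_of_nonneg_ae hnn (by
      exact (hFm.mul (by fun_prop)).aestronglyMeasurable)]
    simp_rw [ENNReal.ofReal_mul (hF0 _), ← hFν]
    rw [dick_swap θ hθ ν x hx]
    have h3 : F x = (ν (Set.Iic x)).toReal := by rw [hFν, ENNReal.toReal_ofReal (hF0 x)]
    have hc : 0 ≤ θ * x ^ θ := by positivity
    rw [h3, hkey x hx.le, ← ENNReal.toReal_ofReal hc, ← ENNReal.toReal_mul,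
      ← lintegral_const_mul' _ _ ENNReal.ofReal_ne_top]
    congr 1
    refine lintegral_congr fun d => ?_
    have hm : 0 < max x (d + 1) := lt_max_of_lt_left hx
    rw [← ENNReal.ofReal_mul hc]
    congr 1
    rw [Real.div_rpow hx.le hm.le, Real.rpow_neg hm.le]
    field_simp
  have hcont : Continuous F := by
    have hrep : F = fun x => ∫ d, (max x 0 / max (max x 0) (max d 0 + 1)) ^ θ ∂ν := by
      funext x
      have h1 : F x = (ν (Set.Iic (max x 0))).toReal := by
        rw [hFν, ENNReal.toReal_ofReal (hF0 _)]
        rcases lt_or_ge x 0 with h | h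
        · rw [hFneg x h, max_eq_right h.le]
          have : ν (Set.Iic 0) = 0 := by
            rw [hkey 0 le_rfl]
            simp [Real.zero_rpow hθ.ne']
          rw [hFν, ENNReal.ofReal_eq_zero] at this
          exact le_antisymm (hF0 0) this
        · rw [max_eq_left h]
      rw [h1, hkey _ (le_max_right _ _), integral_eq_lintegral_of_nonneg_ae]
      · congr 1
        apply lintegral_congr_ae
        filter_upwards [hνnn] with d hd
        rw [max_eq_left hd]
      · exact Eventually.of_forall fun d => by positivity
      · apply Measurable.aestronglyMeasurable
        fun_prop
    rw [hrep]
    apply continuous_of_dominated (bound := fun _ => 1)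
    · intro x
      apply Measurable.aestronglyMeasurable
      fun_prop
    · intro x
      refine Eventually.of_forall fun d => ?_
      have hm : 0 < max (max x 0) (max d 0 + 1) := lt_max_of_lt_right (by positivity)
      rw [Real.norm_of_nonneg (by positivity)]
      exact Real.rpow_le_one (by positivity) ((div_le_one hm).2 (le_max_left _ _)) hθ.le
    · exact integrable_const _
    · refine Eventually.of_forall fun d => ?_
      refine Continuous.rpow_const ?_ (fun _ => Or.inr hθ.le)
      refine Continuous.div (by fun_prop) (by fun_prop) fun x => ?_
      have hm : 0 < max (max x 0) (max d 0 + 1) := lt_max_of_lt_right (by positivity)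
      exact hm.ne'
  refine ⟨hone, hcont, ?_⟩
  rintro x ⟨hx0, hx1⟩
  rcases hx0.eq_or_lt with rfl | hx
  · rw [Real.zero_rpow hθ.ne', mul_zero]
    have : ν (Set.Iic 0) = 0 := by
      rw [hkey 0 le_rfl]
      simp [Real.zero_rpow hθ.ne']
    rw [hFν, ENNReal.ofReal_eq_zero] at this
    exact le_antisymm this (hF0 0)
  · have h0 : F 0 = 0 := by
      have : ν (Set.Iic 0) = 0 := by
        rw [hkey 0 le_rfl]
        simp [Real.zero_rpow hθ.ne']
      rw [hFν, ENNReal.ofReal_eq_zero] at this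
      exact le_antisymm this (hF0 0)
    have h1 : ∫ v in Set.Ioi (x - 1), F v * (1 + v) ^ (-1 - θ)
        = ∫ v in Set.Ioi (0 : ℝ), F v * (1 + v) ^ (-1 - θ) := by
      apply setIntegral_eq_of_subset_of_forall_diff_eq_zero measurableSet_Ioi
      · exact Set.Ioi_subset_Ioi (by linarith)
      · rintro v ⟨_, hv⟩
        have hv' : v ≤ 0 := not_lt.1 hv
        rcases hv'.lt_or_eq with h | h
        · rw [hFneg v h, zero_mul]
        · rw [h, h0, zero_mul]
    rw [hone x hx, h1]
    ring
end

section
/- Let θ > 0, let D be a nonnegative random variable, and let U be uniformly distributed on [0,1] and independent of D, such that U^{1/θ}(D+1) has the same distribution as D. Let F(x) = P(D ≤ x). Then F is differentiable on (0,1) and on (1,∞), and its derivative p := F' satisfies: (1) p(x) = c_θ x^{θ−1} for x ∈ (0,1), where c_θ = θ² ∫_0^∞ F(v)(1+v)^{−1−θ} dv; (2) p(x) = (θ/x)(F(x) − F(x−1)) for x > 1; (3) p is differentiable on (1,∞) and satisfies x p'(x) + (1−θ) p(x) + θ p(x−1) = 0 for all x > 1; and (4) c_θ = θ E[(1+D)^{−θ}].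 -/
open MeasureTheory ProbabilityTheory Filter Topology


theorem dk_section (θ : ℝ) (hθ : 0 < θ) (x d : ℝ) (hx : 0 ≤ x) (hd : 0 ≤ d) :
    (volume.restrict (Set.Icc (0 : ℝ) 1)) {u : ℝ | u ^ (1 / θ) * (d + 1) ≤ x}
      = ENNReal.ofReal (min 1 ((x / (1 + d)) ^ θ)) := by
  rw [Measure.restrict_apply' measurableSet_Icc]
  have : {u : ℝ | u ^ (1 / θ) * (d + 1) ≤ x} ∩ Set.Icc 0 1
      = Set.Icc 0 (min 1 ((x / (1 + d)) ^ θ)) := by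
    ext u
    simp only [Set.mem_inter_iff, Set.mem_ofPred_eq, Set.mem_Icc, le_min_iff]
    have key : 0 ≤ u → (u ^ (1 / θ) * (d + 1) ≤ x ↔ u ≤ (x / (1 + d)) ^ θ) := by
      intro hu
      rw [← Real.rpow_inv_le_iff_of_pos hu (by positivity) hθ, le_div_iff₀ (by positivity),
        one_div, add_comm d 1]
    constructor
    · rintro ⟨h, h0, h1⟩
      exact ⟨h0, h1, (key h0).1 h⟩
    · rintro ⟨h0, h1, h⟩
      exact ⟨(key h0).2 h, h0, h1⟩
  rw [this, Real.volume_Icc, sub_zero]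

theorem dk_tail (θ : ℝ) (hθ : 0 < θ) (a : ℝ) (ha : -1 < a) :
    IntegrableOn (fun v : ℝ => θ * (1 + v) ^ (-1 - θ)) (Set.Ioi a) ∧
    ∫ v in Set.Ioi a, θ * (1 + v) ^ (-1 - θ) = (1 + a) ^ (-θ) := by
  have hder : ∀ v ∈ Set.Ici a, HasDerivAt (fun v : ℝ => -(1 + v) ^ (-θ))
      (θ * (1 + v) ^ (-1 - θ)) v := by
    intro v hv
    have hv' : 0 < 1 + v := by have := Set.mem_Ici.1 hv; linarith
    have h1 : HasDerivAt (fun v : ℝ => 1 + v) 1 v := (hasDerivAt_id v).const_add 1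
    have h2 := (h1.rpow_const (p := -θ) (Or.inl hv'.ne')).neg
    refine h2.congr_deriv ?_
    rw [show -θ - 1 = -1 - θ by ring]; ring
  have hnn : ∀ v ∈ Set.Ioi a, 0 ≤ θ * (1 + v) ^ (-1 - θ) := by
    intro v hv
    have hv' : 0 < 1 + v := by have := Set.mem_Ioi.1 hv; linarith
    positivity
  have hlim : Tendsto (fun v : ℝ => -(1 + v) ^ (-θ)) atTop (𝓝 0) := by
    have h := (tendsto_rpow_neg_atTop hθ).comp (tendsto_atTop_add_const_left atTop (1 : ℝ) tendsto_id)
    simpa using h.neg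
  constructor
  · exact integrableOn_Ioi_deriv_of_nonneg' hder hnn hlim
  · rw [integral_Ioi_of_hasDerivAt_of_nonneg' hder hnn hlim]; ring

theorem dk_tail_l (θ : ℝ) (hθ : 0 < θ) (t d : ℝ) (ht : -1 < t) :
    ∫⁻ v in Set.Ioi t, (if d ≤ v then ENNReal.ofReal (θ * (1 + v) ^ (-1 - θ)) else 0)
      = ENNReal.ofReal ((1 + max d t) ^ (-θ)) := by
  have ha : -1 < max d t := lt_max_of_lt_right ht
  obtain ⟨hi, he⟩ := dk_tail θ hθ _ ha
  rw [← he, ofReal_integral_eq_lintegral_ofReal hi]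
  · rw [← lintegral_indicator measurableSet_Ioi, ← lintegral_indicator measurableSet_Ioi]
    apply lintegral_congr_ae
    have : ∀ᵐ v : ℝ, v ≠ d := by
      simp [ae_iff]
    filter_upwards [this] with v hv
    simp only [Set.indicator_apply, Set.mem_Ioi, max_lt_iff]
    have : d ≤ v ↔ d < v := ⟨fun h => lt_of_le_of_ne h (Ne.symm hv), le_of_lt⟩
    simp only [this]
    by_cases h1 : d < v <;> by_cases h2 : t < v <;> simp [h1, h2]
  · filter_upwards [ae_restrict_mem measurableSet_Ioi] with v hv
    have hv' : 0 < 1 + v := by have := Set.mem_Ioi.1 hv; linarith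
    show (0:ℝ) ≤ _
    positivity

theorem dk_F_formula {Ω : Type*} [MeasurableSpace Ω] (P : Measure Ω) [IsProbabilityMeasure P]
    (θ : ℝ) (hθ : 0 < θ)
    (D U : Ω → ℝ) (hDmeas : Measurable D) (hUmeas : Measurable U)
    (hDnonneg : ∀ᵐ ω ∂P, 0 ≤ D ω)
    (hU : Measure.map U P = volume.restrict (Set.Icc (0 : ℝ) 1))
    (hindep : IndepFun U D P)
    (hfix : Measure.map (fun ω => U ω ^ (1 / θ) * (D ω + 1)) P = Measure.map D P)
    (F : ℝ → ℝ) (hF : ∀ x, F x = (P {ω | D ω ≤ x}).toReal) (x : ℝ) :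
    F x = ∫ ω, min 1 ((max x 0 / (1 + D ω)) ^ θ) ∂P := by
  rcases lt_or_ge x 0 with hx | hx
  · rw [max_eq_right hx.le, hF]
    have h1 : P {ω | D ω ≤ x} = 0 := by
      refine measure_mono_null ?_ (ae_iff.1 hDnonneg)
      intro ω h
      simp only [Set.mem_ofPred_eq] at h ⊢
      linarith
    simp [h1, Real.zero_rpow hθ.ne']
  rw [max_eq_left hx]
  have hUD : Measurable (fun p : ℝ × ℝ => p.1 ^ (1 / θ) * (p.2 + 1)) := by fun_prop
  have hS : MeasurableSet {p : ℝ × ℝ | p.1 ^ (1 / θ) * (p.2 + 1) ≤ x} :=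
    measurableSet_le hUD measurable_const
  have hprod := (indepFun_iff_map_prod_eq_prod_map_map hUmeas.aemeasurable
    hDmeas.aemeasurable).1 hindep
  have e1 : P {ω | D ω ≤ x} = Measure.map D P (Set.Iic x) := by
    rw [Measure.map_apply hDmeas measurableSet_Iic]; rfl
  have e2 : Measure.map D P (Set.Iic x)
      = Measure.map (fun ω => (U ω, D ω)) P {p : ℝ × ℝ | p.1 ^ (1 / θ) * (p.2 + 1) ≤ x} := by
    have hm : Measurable (fun ω => U ω ^ (1 / θ) * (D ω + 1)) := by fun_prop
    rw [← hfix, Measure.map_apply hm measurableSet_Iic,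
      Measure.map_apply (hUmeas.prodMk hDmeas) hS]
    rfl
  have : IsProbabilityMeasure (Measure.map D P) := Measure.isProbabilityMeasure_map hDmeas.aemeasurable
  have hm : Measurable (fun d : ℝ => min 1 ((x / (1 + d)) ^ θ)) := by fun_prop
  rw [hF, e1, e2, hprod, Measure.prod_apply_symm hS, hU,
    lintegral_map (measurable_measure_prodMk_right hS) hDmeas,
    integral_eq_lintegral_of_nonneg_ae]
  · congr 1
    apply lintegral_congr_ae
    filter_upwards [hDnonneg] with ω hω
    exact dk_section θ hθ x (D ω) hx hω
  · filter_upwards [hDnonneg] with ω hω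
    show (0:ℝ) ≤ _
    positivity
  · exact (hm.comp hDmeas).aestronglyMeasurable

theorem dk_K_formula {Ω : Type*} [MeasurableSpace Ω] (P : Measure Ω) [IsProbabilityMeasure P]
    (θ : ℝ) (hθ : 0 < θ)
    (D : Ω → ℝ) (hDmeas : Measurable D)
    (F : ℝ → ℝ) (hF : ∀ x, F x = (P {ω | D ω ≤ x}).toReal) (hFm : Measurable F)
    (t : ℝ) (ht : -1 < t) :
    ∫ ω, (1 + max (D ω) t) ^ (-θ) ∂P
      = θ * ∫ v in Set.Ioi t, F v * (1 + v) ^ (-1 - θ) := by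
  rw [← integral_const_mul, integral_eq_lintegral_of_nonneg_ae,
    integral_eq_lintegral_of_nonneg_ae]
  · congr 1
    have hmeas : Measurable (fun p : Ω × ℝ =>
        if D p.1 ≤ p.2 then ENNReal.ofReal (θ * (1 + p.2) ^ (-1 - θ)) else 0) := by
      refine Measurable.ite (measurableSet_le (hDmeas.comp measurable_fst) measurable_snd) ?_
        measurable_const
      fun_prop
    calc ∫⁻ ω, ENNReal.ofReal ((1 + max (D ω) t) ^ (-θ)) ∂P
        = ∫⁻ ω, (∫⁻ v in Set.Ioi t,
          (if D ω ≤ v then ENNReal.ofReal (θ * (1 + v) ^ (-1 - θ)) else 0)) ∂P := by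
          simp_rw [dk_tail_l θ hθ t _ ht]
      _ = ∫⁻ v in Set.Ioi t, ∫⁻ ω,
          (if D ω ≤ v then ENNReal.ofReal (θ * (1 + v) ^ (-1 - θ)) else 0) ∂P :=
          lintegral_lintegral_swap hmeas.aemeasurable
      _ = _ := by
          apply setLIntegral_congr_fun measurableSet_Ioi
          intro v hv
          have hs : MeasurableSet {ω | D ω ≤ v} := measurableSet_le hDmeas measurable_const
          have : (fun ω => if D ω ≤ v then ENNReal.ofReal (θ * (1 + v) ^ (-1 - θ)) else 0)
            = Set.indicator {ω | D ω ≤ v} (fun _ => ENNReal.ofReal (θ * (1 + v) ^ (-1 - θ))) := by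
            ext ω; simp [Set.indicator_apply]
          simp only [this, lintegral_indicator_const hs]
          have hFv : P {ω | D ω ≤ v} = ENNReal.ofReal (F v) := by
            rw [hF, ENNReal.ofReal_toReal (measure_ne_top _ _)]
          have hv' : 0 < 1 + v := by have := Set.mem_Ioi.1 hv; linarith
          rw [hFv, ← ENNReal.ofReal_mul (by positivity)]
          congr 1; ring
  · filter_upwards [ae_restrict_mem measurableSet_Ioi] with v hv
    have hv' : 0 < 1 + v := by have := Set.mem_Ioi.1 hv; linarith
    have : 0 ≤ F v := by rw [hF]; positivity
    show (0:ℝ) ≤ _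
    positivity
  · apply Measurable.aestronglyMeasurable
    fun_prop
  · refine Eventually.of_forall fun ω => ?_
    have : t ≤ max (D ω) t := le_max_right _ _
    exact Real.rpow_nonneg (by linarith) _
  · apply Measurable.aestronglyMeasurable
    fun_prop

theorem dk_K_deriv (θ : ℝ) (hθ : 0 < θ) (F : ℝ → ℝ) (hFc : Continuous F)
    (hb : ∀ x, ‖F x‖ ≤ 1) (t : ℝ) (ht : -1 < t) :
    HasDerivAt (fun t => ∫ v in Set.Ioi t, F v * (1 + v) ^ (-1 - θ))
      (-(F t * (1 + t) ^ (-1 - θ))) t := by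
  obtain ⟨a, ha1, hat⟩ := exists_between ht
  have hint : IntegrableOn (fun v : ℝ => F v * (1 + v) ^ (-1 - θ)) (Set.Ioi a) := by
    have h := (dk_tail θ hθ a ha1).1.const_mul θ⁻¹
    have h' : IntegrableOn (fun v : ℝ => (1 + v) ^ (-1 - θ)) (Set.Ioi a) := by
      refine h.congr (Eventually.of_forall fun v => ?_)
      simp only
      field_simp
    exact h'.bdd_mul (c := 1) hFc.aestronglyMeasurable (Eventually.of_forall hb)
  have hmeas : Measurable (fun v : ℝ => F v * (1 + v) ^ (-1 - θ)) := by
    have := hFc.measurable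
    fun_prop
  have hd : HasDerivAt (fun u => ∫ v in a..u, F v * (1 + v) ^ (-1 - θ))
      (F t * (1 + t) ^ (-1 - θ)) t := by
    apply intervalIntegral.integral_hasDerivAt_right
    · rw [intervalIntegrable_iff_integrableOn_Ioc_of_le hat.le]
      exact hint.mono_set Set.Ioc_subset_Ioi_self
    · exact ⟨Set.univ, univ_mem, hmeas.aestronglyMeasurable⟩
    · refine hFc.continuousAt.mul (ContinuousAt.rpow_const (by fun_prop) (Or.inl ?_))
      linarith
  refine (hd.const_sub (∫ v in Set.Ioi a, F v * (1 + v) ^ (-1 - θ))).congr_of_eventuallyEq ?_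
  filter_upwards [lt_mem_nhds hat] with u hu
  have := intervalIntegral.integral_Ioi_sub_Ioi hint hu.le
  linarith

theorem dickman_density_properties
    {Ω : Type*} [MeasurableSpace Ω] (P : Measure Ω) [IsProbabilityMeasure P]
    (θ : ℝ) (hθ : 0 < θ)
    (D U : Ω → ℝ) (hDmeas : Measurable D) (hUmeas : Measurable U)
    (hDnonneg : ∀ᵐ ω ∂P, 0 ≤ D ω)
    (hU : Measure.map U P = volume.restrict (Set.Icc (0 : ℝ) 1))
    (hindep : IndepFun U D P)
    (hfix : Measure.map (fun ω => U ω ^ (1 / θ) * (D ω + 1)) P = Measure.map D P)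
    (F : ℝ → ℝ) (hF : ∀ x, F x = (P {ω | D ω ≤ x}).toReal) :
    (∀ x ∈ Set.Ioo (0 : ℝ) 1, DifferentiableAt ℝ F x) ∧
    (∀ x ∈ Set.Ioi (1 : ℝ), DifferentiableAt ℝ F x) ∧
    (∀ x ∈ Set.Ioo (0 : ℝ) 1,
      deriv F x = (θ ^ 2 * ∫ v in Set.Ioi (0 : ℝ), F v * (1 + v) ^ (-1 - θ)) *
        x ^ (θ - 1)) ∧
    (∀ x ∈ Set.Ioi (1 : ℝ), deriv F x = (θ / x) * (F x - F (x - 1))) ∧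
    (∀ x ∈ Set.Ioi (1 : ℝ), DifferentiableAt ℝ (deriv F) x ∧
      x * deriv (deriv F) x + (1 - θ) * deriv F x + θ * deriv F (x - 1) = 0) ∧
    θ ^ 2 * ∫ v in Set.Ioi (0 : ℝ), F v * (1 + v) ^ (-1 - θ) =
      θ * ∫ ω, (1 + D ω) ^ (-θ) ∂P := by
  have hform := dk_F_formula P θ hθ D U hDmeas hUmeas hDnonneg hU hindep hfix F hF
  have hFc : Continuous F := by
    have : F = fun x => ∫ ω, min 1 ((max x 0 / (1 + D ω)) ^ θ) ∂P := funext hform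
    rw [this]
    refine continuous_of_dominated (bound := fun _ => 1) ?_ ?_ (integrable_const _) ?_
    · intro x
      apply Measurable.aestronglyMeasurable
      fun_prop
    · intro x
      filter_upwards [hDnonneg] with ω hω
      have : 0 ≤ (max x 0 / (1 + D ω)) ^ θ :=
        Real.rpow_nonneg (div_nonneg (le_max_right _ _) (by linarith)) _
      rw [Real.norm_of_nonneg (le_min zero_le_one this)]
      exact min_le_left _ _
    · refine Eventually.of_forall fun ω => ?_
      refine continuous_const.min (Continuous.rpow_const (by fun_prop) fun _ => Or.inr hθ.le)
  have hb : ∀ x, ‖F x‖ ≤ 1 := by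
    intro x
    rw [hF, Real.norm_of_nonneg ENNReal.toReal_nonneg]
    exact measureReal_le_one
  have hF0 : ∀ x ≤ 0, F x = 0 := by
    intro x hx
    rw [hform, max_eq_right hx]
    simp [Real.zero_rpow hθ.ne']
  have hK := dk_K_formula P θ hθ D hDmeas F hF hFc.measurable
  have hmaster : ∀ x, 0 < x → F x
      = x ^ θ * (θ * ∫ v in Set.Ioi (x - 1), F v * (1 + v) ^ (-1 - θ)) := by
    intro x hx
    rw [← hK (x - 1) (by linarith), hform, max_eq_left hx.le, ← integral_const_mul]
    apply integral_congr_ae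
    filter_upwards [hDnonneg] with ω hω
    have h1 : 0 < 1 + D ω := by linarith
    have e : 1 + max (D ω) (x - 1) = max (1 + D ω) x := by
      rw [← max_add_add_left]; congr 1; ring
    simp only [e]
    rcases le_total (1 + D ω) x with h | h
    · rw [max_eq_right h, min_eq_left, ← Real.rpow_add hx]
      · simp
      · exact Real.one_le_rpow ((one_le_div h1).2 h) hθ.le
    · rw [max_eq_left h, min_eq_right, Real.div_rpow hx.le h1.le, Real.rpow_neg h1.le]
      · rfl
      · exact Real.rpow_le_one (by positivity) ((div_le_one h1).2 h) hθ.le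
  have hder : ∀ x, 0 < x → HasDerivAt F ((θ / x) * (F x - F (x - 1))) x := by
    intro x hx
    have h1 := dk_K_deriv θ hθ F hFc hb (x - 1) (by linarith)
    have h2 := h1.comp_sub_const x 1
    have h3 := (Real.hasDerivAt_rpow_const (p := θ) (Or.inl hx.ne')).mul (h2.const_mul θ)
    have h4 : F =ᶠ[𝓝 x] fun x =>
        x ^ θ * (θ * ∫ v in Set.Ioi (x - 1), F v * (1 + v) ^ (-1 - θ)) := by
      filter_upwards [lt_mem_nhds hx] with y hy using hmaster y hy
    refine (h3.congr_of_eventuallyEq h4).congr_deriv ?_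
    rw [hmaster x hx, show 1 + (x - 1) = x by ring]
    have e1 : x ^ (θ - 1) = x ^ θ / x := Real.rpow_sub_one hx.ne' θ
    have e2 : x ^ (-1 - θ) = x⁻¹ * (x ^ θ)⁻¹ := by
      rw [sub_eq_add_neg, Real.rpow_add hx, Real.rpow_neg_one, Real.rpow_neg hx.le]
    have : x ^ θ ≠ 0 := (Real.rpow_pos_of_pos hx θ).ne'
    rw [e1, e2]
    field_simp
    ring
  have hderiv : ∀ x, 0 < x → deriv F x = (θ / x) * (F x - F (x - 1)) :=
    fun x hx => (hder x hx).deriv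
  refine ⟨fun x hx => (hder x hx.1).differentiableAt,
    fun x hx => (hder x (zero_lt_one.trans hx)).differentiableAt, ?_,
    fun x hx => hderiv x (zero_lt_one.trans hx), ?_, ?_⟩
  · rintro x ⟨hx0, hx1⟩
    have e : ∫ v in Set.Ioi (x - 1), F v * (1 + v) ^ (-1 - θ)
        = ∫ v in Set.Ioi (0 : ℝ), F v * (1 + v) ^ (-1 - θ) := by
      refine (setIntegral_eq_of_subset_of_forall_sdiff_eq_zero measurableSet_Ioi
        (Set.Ioi_subset_Ioi (by linarith)) ?_)
      rintro v ⟨-, hv⟩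
      rw [hF0 v (not_lt.1 hv), zero_mul]
    rw [hderiv x hx0, hF0 (x - 1) (by linarith), hmaster x hx0, e, Real.rpow_sub_one hx0.ne']
    ring
  · intro x hx
    have hx1 : 1 < x := hx
    have hx0 : 0 < x := by linarith
    have ha := hder x hx0
    have hb' := (hder (x - 1) (by linarith)).comp_sub_const x 1
    have hc := ((hasDerivAt_const x θ).div (hasDerivAt_id x) hx0.ne').mul (ha.sub hb')
    have h4 : deriv F =ᶠ[𝓝 x] fun x => (θ / x) * (F x - F (x - 1)) := by
      filter_upwards [lt_mem_nhds hx0] with y hy using hderiv y hy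
    have hd := hc.congr_of_eventuallyEq h4
    refine ⟨hd.differentiableAt, ?_⟩
    rw [hd.deriv, hderiv x hx0, hderiv (x - 1) (by linarith)]
    have : x - 1 ≠ 0 := by linarith
    simp
    field_simp
    ring
  · have e : ∫ ω, (1 + D ω) ^ (-θ) ∂P = ∫ ω, (1 + max (D ω) 0) ^ (-θ) ∂P := by
      apply integral_congr_ae
      filter_upwards [hDnonneg] with ω hω
      simp only [max_eq_left hω]
    rw [e, hK 0 (by norm_num)]
    ring
end
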